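/- Let d ≥ 2 be a natural number and let 1, 2 denote the first two indices of Fin n. Then the following identity of derivations holds: (d : ℂ) • ⁅(x_{1,2})^d • Θ_{1,2}, x_{1,2} • Ξ_1⁆ − ⁅x_{1,2} • Θ_{1,2}, (x_{1,2})^d • Ξ_1⁆ = ((−2*d*(d−1) : ℤ) : ℂ) • ((x_{1,2})^(d+1) • Θ_{1,2}). In particular, for d ≥ 2 the field (x_{1,2})^(d+1) • Θ_{1,2} lies in the ℂ-span of the two brackets on the left-hand side. (The linear-combination-of-brackets computation in the induction step of the proof of Proposition 4.5 of the paper, written in the commutator convention ⁅D,D'⁆ = D∘D' − D'∘D, in which the numerical coefficient differs from the paper's.) -/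

import Mathlib

/-!
Write `u = x_{1,2}`, `T = Θ_{1,2}`, `H = Ξ_1`. The field `H` acts diagonally on the coordinates, with
`H u = 2 u`, and `T` is a weight vector for it: `⁅T, H⁆ = 2 T` (`commutator_Theta_Xi`, checked on the
generators `x_{p,q}`). The Leibniz rule gives

* `⁅u ^ d T, u H⁆ = u ^ d T(u) H - 2 d u ^ (d + 1) T + 2 u ^ (d + 1) T`,
* `⁅u T, u ^ d H⁆ = d u ^ d T(u) H - 2 u ^ (d + 1) T + 2 u ^ (d + 1) T`,

so in `d` times the first minus the second the `H`-terms cancel and the coefficient of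
`u ^ (d + 1) T` is `-2 d (d - 1)`, which is nonzero for `d ≥ 2`; dividing by it gives the membership
in the span.
-/

open MvPolynomial

/-- The polynomial ring in the `n²` matrix entries. -/
abbrev MatPoly (n : ℕ) := MvPolynomial (Fin n × Fin n) ℂ

/-- The fundamental vector field `Θ_{a,b}` of the conjugation action. -/
noncomputable def Theta {n : ℕ} (a b : Fin n) : Derivation ℂ (MatPoly n) (MatPoly n) :=
  ∑ k : Fin n,
    ((X (b, k) : MatPoly n) • (pderiv (a, k) : Derivation ℂ (MatPoly n) (MatPoly n))
      - (X (k, a) : MatPoly n) • (pderiv (k, b) : Derivation ℂ (MatPoly n) (MatPoly n)))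

/-- The hyperbolic vector field `Ξ_a`, where `a'` denotes the successor `a + 1`. -/
noncomputable def Xi {n : ℕ} (a a' : Fin n) : Derivation ℂ (MatPoly n) (MatPoly n) :=
  ∑ k : Fin n,
    ((X (a, k) : MatPoly n) • (pderiv (a, k) : Derivation ℂ (MatPoly n) (MatPoly n))
      - (X (a', k) : MatPoly n) • (pderiv (a', k) : Derivation ℂ (MatPoly n) (MatPoly n))
      - (X (k, a) : MatPoly n) • (pderiv (k, a) : Derivation ℂ (MatPoly n) (MatPoly n))
      + (X (k, a') : MatPoly n) • (pderiv (k, a') : Derivation ℂ (MatPoly n) (MatPoly n)))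

lemma sum_Derivation_apply {n : ℕ} (D : Fin n → Derivation ℂ (MatPoly n) (MatPoly n))
    (f : MatPoly n) : (∑ k, D k) f = ∑ k, D k f := by
  exact (congrFun (map_sum Derivation.coeFnAddMonoidHom D Finset.univ) f).trans (by simp)

lemma Theta_X {n : ℕ} (a b p q : Fin n) :
    Theta a b (X (p, q)) =
      (if p = a then X (b, q) else 0) - (if q = b then X (p, a) else 0) := by
  simp [Theta, sum_Derivation_apply, pderiv_X, Pi.single_apply,
    Prod.ext_iff, ite_and, Finset.sum_sub_distrib, Finset.sum_ite_eq]

lemma Xi_X {n : ℕ} (a b p q : Fin n) :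
    Xi a b (X (p, q)) =
      ((if p = a then 1 else 0) - (if p = b then 1 else 0)
        - (if q = a then 1 else 0) + (if q = b then 1 else 0)) * X (p, q) := by
  simp only [Xi, sum_Derivation_apply, pderiv_X, Pi.single_apply,
    Prod.ext_iff, ite_and, Finset.sum_sub_distrib, Finset.sum_add_distrib, Derivation.add_apply,
    Derivation.sub_apply, Derivation.smul_apply, smul_eq_mul, mul_ite, mul_one, mul_zero]
  simp only [Finset.sum_ite_eq, Finset.sum_ite_irrel, Finset.mem_univ, if_true,
    Finset.sum_const_zero]
  split_ifs <;> subst_vars <;> ring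

/-- `Θ_{a,b}` is a weight vector for `Ξ`, as the root vector of a `sl₂`-triple is for its Cartan
element. -/
lemma commutator_Theta_Xi {n : ℕ} {a b : Fin n} (hab : a ≠ b) :
    ⁅Theta a b, Xi a b⁆ = (2 : ℂ) • Theta a b := by
  apply MvPolynomial.derivation_ext
  rintro ⟨p, q⟩
  have hba := hab.symm
  rw [Derivation.commutator_apply, Derivation.smul_apply, Xi_X, Theta_X, smul_eq_C_mul,
    map_ofNat C 2]
  by_cases h1 : p = a <;> by_cases h2 : p = b <;> by_cases h3 : q = a <;> by_cases h4 : q = b <;>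
    simp [*, Theta_X, Xi_X] <;> subst_vars <;>
    first | contradiction | (simp_all; done) | (left; ring1) | ring1

theorem stmt_11 {n : ℕ} (hn : 2 ≤ n) (d : ℕ) (hd : 2 ≤ d)
    (i1 i2 : Fin n) (h1 : (i1 : ℕ) = 0) (h2 : (i2 : ℕ) = 1) :
    (d : ℂ) • ⁅((X (i1, i2) : MatPoly n) ^ d) • Theta i1 i2,
        (X (i1, i2) : MatPoly n) • Xi i1 i2⁆
      - ⁅(X (i1, i2) : MatPoly n) • Theta i1 i2,
          ((X (i1, i2) : MatPoly n) ^ d) • Xi i1 i2⁆ =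
      (((-2 * d * (d - 1) : ℤ)) : ℂ) • (((X (i1, i2) : MatPoly n) ^ (d + 1)) • Theta i1 i2)
    ∧ ((X (i1, i2) : MatPoly n) ^ (d + 1)) • Theta i1 i2 ∈
        Submodule.span ℂ
          {⁅((X (i1, i2) : MatPoly n) ^ d) • Theta i1 i2,
              (X (i1, i2) : MatPoly n) • Xi i1 i2⁆,
            ⁅(X (i1, i2) : MatPoly n) • Theta i1 i2,
              ((X (i1, i2) : MatPoly n) ^ d) • Xi i1 i2⁆} := by
  have hne : i1 ≠ i2 := by
    rintro rfl
    omega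
  have hT : ∀ f, Theta i1 i2 (Xi i1 i2 f) = Xi i1 i2 (Theta i1 i2 f) + 2 * Theta i1 i2 f := by
    intro f
    have h := congrArg (fun D => D f) (commutator_Theta_Xi hne)
    simp only [Derivation.commutator_apply, Derivation.smul_apply, smul_eq_C_mul, map_ofNat C 2] at h
    linear_combination h
  have hu : Xi i1 i2 (X (i1, i2)) = 2 * X (i1, i2) := by
    rw [Xi_X]
    simp [hne, hne.symm]
    ring
  -- The identity implies the membership, which leaves the identity and this implication to prove.
  rw [and_iff_left_of_imp]
  · obtain ⟨e, rfl⟩ : ∃ e, d = e + 1 := ⟨d - 1, by omega⟩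
    ext1 f
    simp only [Derivation.sub_apply, Derivation.smul_apply, Derivation.commutator_apply,
      Derivation.leibniz, Derivation.leibniz_pow, smul_eq_mul, nsmul_eq_mul, hT, hu,
      smul_eq_C_mul, Nat.add_sub_cancel]
    push_cast
    simp only [map_mul, map_add, map_sub, map_neg, map_natCast, map_one, map_ofNat C 2]
    ring
  · intro h
    have hc : (((-2 * d * (d - 1) : ℤ)) : ℂ) ≠ 0 := by
      have : (-2 * d * (d - 1) : ℤ) ≠ 0 :=
        mul_ne_zero (mul_ne_zero (by norm_num) (by omega)) (by omega)
      exact_mod_cast this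
    rw [← Submodule.smul_mem_iff _ hc, ← h]
    exact Submodule.sub_mem _ (Submodule.smul_mem _ _ (Submodule.subset_span (by simp)))
      (Submodule.subset_span (by simp))
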